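/- arXiv:math-ph/0610085 — 2 statements merged into one kernel-verified Lean document; each statement's English description precedes it below -/
import Mathlib

section
/- Let f : ℝ → ℝ be smooth (C^∞), let x̃ be a global solution of ẋ = f(x), let t_in ∈ ℝ, and let g₁, …, g_m (m ≥ 1) be finitely many global solutions of ẋ = f(x) such that for every pair of indices k, l there exists c ∈ ℝ with g_k(t) = g_l(t) for all t < c. If g₁(t_in) = x̃(t_in), then g_k = x̃ everywhere on ℝ for every k = 1, …, m. (This expresses that on a temporal tree — a time axis subjected to finitely many iterated Visser splittings, on which an ℝ-valued function corresponds to one branch function per maximal branch, any two branch functions agreeing on the common initial ray of time preceding their branching — the Cauchy problem ẋ = f(x), x(t_in) = x̃(t_in) is well-posed, admitting one and only one solution.) -/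
/-- `g : ℝ → ℝ` is a global solution of the autonomous ODE `ẋ = f(x)`:
it is differentiable at every `t` with derivative `g'(t) = f(g(t))`. -/
def IsGlobalSolution (f g : ℝ → ℝ) : Prop := ∀ t : ℝ, HasDerivAt g (f (g t)) t

theorem global_solution_unique (f : ℝ → ℝ) (hf : ContDiff ℝ (⊤ : ℕ∞) f) (u v : ℝ → ℝ)
    (hu : IsGlobalSolution f u) (hv : IsGlobalSolution f v) (t₀ : ℝ) (h0 : u t₀ = v t₀) :
    u = v := by
  have cu : Continuous u := continuous_iff_continuousAt.2 fun t => (hu t).continuousAt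
  have cv : Continuous v := continuous_iff_continuousAt.2 fun t => (hv t).continuousAt
  have hclopen : IsClopen {t | u t = v t} := by
    refine ⟨isClosed_eq cu cv, isOpen_iff_mem_nhds.2 fun t ht => ?_⟩
    obtain ⟨K, s, hs, hK⟩ :=
      ((hf.of_le (by exact_mod_cast le_top)).contDiffAt (x := u t) :
        ContDiffAt ℝ 1 f (u t)).exists_lipschitzOnWith
    have ht' : u t = v t := ht
    exact ODE_solution_unique_of_eventually (v := fun _ => f) (s := fun _ => s)
      (Filter.Eventually.of_forall fun _ => hK)
      ((cu.continuousAt.eventually hs).mono fun x hx => ⟨hu x, hx⟩)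
      ((cv.continuousAt.eventually (ht' ▸ hs)).mono fun x hx => ⟨hv x, hx⟩) ht'
  funext t
  have : t ∈ {t | u t = v t} := by
    rw [hclopen.eq_univ ⟨t₀, h0⟩]; trivial
  exact this

/-- Well-posedness of the Cauchy problem on a temporal tree: an ℝ-valued function on the
tree is a finite family `g₁, …, g_m` of global solutions (one per maximal branch), any two
of which agree on a common initial ray `(−∞, c)`; if one branch function matches the
ordinary solution `xT` at the initial time `t_in`, then every branch function coincides
with `xT` everywhere, i.e. the Cauchy problem admits one and only one solution. -/
theorem cauchy_wellPosed_temporal_tree (f : ℝ → ℝ) (hf : ContDiff ℝ (⊤ : ℕ∞) f)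
    (xT : ℝ → ℝ) (hx : IsGlobalSolution f xT) (t_in : ℝ)
    (m : ℕ) (hm : 1 ≤ m) (g : Fin m → ℝ → ℝ)
    (hg : ∀ k : Fin m, IsGlobalSolution f (g k))
    (hagree : ∀ k l : Fin m, ∃ c : ℝ, ∀ t : ℝ, t < c → g k t = g l t)
    (hinit : g ⟨0, hm⟩ t_in = xT t_in) :
    ∀ (k : Fin m) (t : ℝ), g k t = xT t := by
  intro k t
  have h1 := global_solution_unique f hf _ _ (hg ⟨0, hm⟩) hx t_in hinit
  obtain ⟨c, hc⟩ := hagree k ⟨0, hm⟩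
  have h2 := global_solution_unique f hf _ _ (hg k) (hg ⟨0, hm⟩) (c - 1) (hc _ (by linarith))
  rw [h2, h1]
end

section
/- Let f : ℝ → ℝ be smooth (C^∞), let x̃ be a global solution of ẋ = f(x), and let t_in ∈ ℝ. Then there exist global solutions g₁, g₂ of ẋ = f(x) such that g₁(t) = g₂(t) for all t < 0, g₁ is 2π-periodic (g₁(t + 2π) = g₁(t) for all t), and g₁(t_in) = x̃(t_in), if and only if x̃ is 2π-periodic; in that case the pair is unique and g₁ = g₂ = x̃, so that g₂ is 2π-periodic as well. (This expresses that on the temporal structure obtained from the Visser splitting Split(ℝ, [0, +∞), 2) by further identifying the trunk time −π with the first-branch time +π₁ — thereby introducing a chronological circularity through the first branch — the Cauchy problem ẋ = f(x), x(t_in) = x̃(t_in) is well-defined if and only if the consistency condition that x̃ takes equal values at identified times holds, in which case event A may be both the cause and the effect of event B without logical inconsistency.) -/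
open Real

theorem isGlobalSolution_unique {f g h : ℝ → ℝ} (hf : ContDiff ℝ (⊤ : ℕ∞) f)
    (hg : IsGlobalSolution f g) (hh : IsGlobalSolution f h) {t₀ : ℝ} (h0 : g t₀ = h t₀) :
    ∀ t, g t = h t := by
  have hgc : Continuous g := continuous_iff_continuousAt.2 fun t => (hg t).continuousAt
  have hhc : Continuous h := continuous_iff_continuousAt.2 fun t => (hh t).continuousAt
  have hcl : IsClopen {t | g t = h t} := by
    refine ⟨isClosed_eq hgc hhc, isOpen_iff_mem_nhds.2 fun t ht => ?_⟩
    have ht' : g t = h t := ht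
    have hf1 : ContDiffAt ℝ 1 f (g t) := (hf.of_le (by exact_mod_cast le_top)).contDiffAt
    obtain ⟨K, s, hs, hK⟩ := hf1.exists_lipschitzOnWith
    have hs' : s ∈ nhds (h t) := ht' ▸ hs
    exact ODE_solution_unique_of_eventually (v := fun _ => f) (s := fun _ => s) (K := K)
      (Filter.Eventually.of_forall fun _ => hK)
      ((hgc.continuousAt.eventually hs).mono fun u hu => ⟨hg u, hu⟩)
      ((hhc.continuousAt.eventually hs').mono fun u hu => ⟨hh u, hu⟩) ht'
  have hu := hcl.eq_univ ⟨t₀, h0⟩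
  intro t
  have : t ∈ {t | g t = h t} := hu ▸ Set.mem_univ t
  exact this

/-- On the temporal structure obtained from `Split(ℝ, [0,+∞), 2)` by identifying the trunk
time `−π` with the first-branch time `+π₁` (a chronological circularity through the first
branch), an ℝ-valued function is a pair `(g₁, g₂)` of global solutions agreeing on `(−∞, 0)`
with `g₁` 2π-periodic. The Cauchy problem `ẋ = f(x)`, `x(t_in) = xT(t_in)` is well-defined
if and only if `xT` is 2π-periodic; in that case the pair is unique and `g₁ = g₂ = xT`, so
`g₂` is 2π-periodic as well. -/
theorem cauchy_circularity_through_branch (f : ℝ → ℝ) (hf : ContDiff ℝ (⊤ : ℕ∞) f)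
    (xT : ℝ → ℝ) (hx : IsGlobalSolution f xT) (t_in : ℝ) :
    ((∃ g₁ g₂ : ℝ → ℝ, IsGlobalSolution f g₁ ∧ IsGlobalSolution f g₂ ∧
        (∀ t : ℝ, t < 0 → g₁ t = g₂ t) ∧ (∀ t : ℝ, g₁ (t + 2 * π) = g₁ t) ∧
        g₁ t_in = xT t_in) ↔ (∀ t : ℝ, xT (t + 2 * π) = xT t)) ∧
    ((∀ t : ℝ, xT (t + 2 * π) = xT t) → ∀ g₁ g₂ : ℝ → ℝ,
      IsGlobalSolution f g₁ → IsGlobalSolution f g₂ →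
      (∀ t : ℝ, t < 0 → g₁ t = g₂ t) → (∀ t : ℝ, g₁ (t + 2 * π) = g₁ t) →
      g₁ t_in = xT t_in →
      (∀ t : ℝ, g₁ t = xT t) ∧ (∀ t : ℝ, g₂ t = xT t)) := by
  refine ⟨⟨?_, ?_⟩, ?_⟩
  · rintro ⟨g₁, g₂, h1, h2, -, hp, h0⟩ t
    have e := isGlobalSolution_unique hf h1 hx h0
    rw [← e, ← e, hp]
  · intro hp
    exact ⟨xT, xT, hx, hx, fun _ _ => rfl, hp, rfl⟩
  · intro _ g₁ g₂ h1 h2 h12 _ h0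
    have e := isGlobalSolution_unique hf h1 hx h0
    refine ⟨e, isGlobalSolution_unique hf h2 hx (t₀ := -1) ?_⟩
    rw [← h12 (-1) (by norm_num), e]
end
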